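/- Let P be a symmetric positive definite n×n real matrix, let x, x* ∈ ℝⁿ with x ≠ x*, let r = (x − x*)/‖x − x*‖, let E be an invertible n×n real matrix whose first column is r, let Γ > 0, let D = diag(1 − Γ, 1, …, 1), let M = E D E⁻¹, and let f ∈ ℝⁿ. If 2 (x − x*)ᵀ P f < 0 (the nominal Lyapunov decrease condition) and (E⁻¹ f)₁ ≥ 0 (the nominal field has a nonnegative component along the reference direction), then 2 (x − x*)ᵀ P (M f) < 0; that is, the modulated vector field M f strictly decreases the Lyapunov function V(y) = (y − x*)ᵀ P (y − x*) at x. -/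

import Mathlib

open Matrix

/-!
Since `diag(1 - Γ, 1, …, 1) = 1 - Γ e₁ e₁ᵀ`, the modulation matrix is a rank-one perturbation of the
identity, `M = 1 - Γ r ρ`, where `r` is the first column of `E` and `ρ` the first row of `E⁻¹`.
Hence `M f = f - Γ (ρ f) r`, and modulating a field with `ρ f ≥ 0` only subtracts a nonnegative
multiple of `r`. As `r` points from `x*` to `x`, a direction in which the Lyapunov function does not
decrease, this cannot raise the rate of change of the Lyapunov function.
-/

lemma diagonal_ite_one_sub {ι R : Type*} [DecidableEq ι] [AddGroupWithOne R] (j : ι) (γ : R) :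
    diagonal (fun i => if i = j then 1 - γ else 1) = 1 - Matrix.single j j γ := by
  rw [← diagonal_single, ← diagonal_one, diagonal_sub]
  congr 1 with i
  by_cases hi : i = j <;> simp [hi]

lemma mul_single_mul_eq_smul_vecMulVec {l m n o R : Type*} [Fintype m] [Fintype n]
    [DecidableEq m] [DecidableEq n] [CommSemiring R]
    (A : Matrix l m R) (i : m) (j : n) (γ : R) (B : Matrix n o R) :
    A * Matrix.single i j γ * B = γ • vecMulVec (A.col i) (B.row j) := by
  have single_eq : Matrix.single i j γ = γ • vecMulVec (Pi.single i 1) (Pi.single j 1) := by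
    rw [← single_eq_single_vecMulVec_single, smul_single, smul_eq_mul, mul_one]
  rw [single_eq, Matrix.mul_smul, Matrix.smul_mul, mul_vecMulVec, vecMulVec_mul,
    mulVec_single_one, single_one_vecMul]

section Modulation

variable {ι R : Type*} [Fintype ι] [DecidableEq ι] [CommRing R]

/-- The modulation matrix `E D E⁻¹` of a basis `E` (given by its columns) with reference index `j`
and strength `γ`: it scales the `j`-th coordinate with respect to `E` by `1 - γ` and keeps the
others. For singular `E` it is `0`, since then `E⁻¹ = 0`. -/
noncomputable def modulationMatrix (E : Matrix ι ι R) (j : ι) (γ : R) : Matrix ι ι R :=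
  E * diagonal (fun i => if i = j then 1 - γ else 1) * E⁻¹

lemma modulationMatrix_eq_one_sub_smul_vecMulVec {E : Matrix ι ι R} (hE : IsUnit E.det)
    (j : ι) (γ : R) :
    modulationMatrix E j γ = 1 - γ • vecMulVec (E.col j) (E⁻¹.row j) := by
  rw [modulationMatrix, diagonal_ite_one_sub, mul_sub, sub_mul, mul_one, mul_nonsing_inv E hE,
    mul_single_mul_eq_smul_vecMulVec]

lemma modulationMatrix_mulVec {E : Matrix ι ι R} (hE : IsUnit E.det) (j : ι) (γ : R) (f : ι → R) :
    modulationMatrix E j γ *ᵥ f = f - (γ * (E⁻¹ *ᵥ f) j) • E.col j := by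
  rw [modulationMatrix_eq_one_sub_smul_vecMulVec hE, sub_mulVec, one_mulVec, smul_mulVec,
    vecMulVec_mulVec, op_smul_eq_smul, smul_smul]
  rfl

lemma dotProduct_modulationMatrix_mulVec_le [PartialOrder R] [IsOrderedRing R]
    {E : Matrix ι ι R} (hE : IsUnit E.det) {j : ι} {γ : R} (hγ : 0 ≤ γ) {w f : ι → R}
    (hw : 0 ≤ w ⬝ᵥ E.col j) (hf : 0 ≤ (E⁻¹ *ᵥ f) j) :
    w ⬝ᵥ modulationMatrix E j γ *ᵥ f ≤ w ⬝ᵥ f := by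
  rw [modulationMatrix_mulVec hE, dotProduct_sub, dotProduct_smul, smul_eq_mul]
  exact sub_le_self _ (mul_nonneg (mul_nonneg hγ hf) hw)

end Modulation

theorem modulated_lyapunov_decrease_general {ι : Type*} [Fintype ι] [DecidableEq ι]
    {P : Matrix ι ι ℝ} (hP : P.PosSemidef) {x xstar : ι → ℝ}
    {E : Matrix ι ι ℝ} (hE : IsUnit E.det) {j : ι} {c : ℝ} (hc : 0 ≤ c)
    (hEj : E.col j = c • (x - xstar)) {Γ : ℝ} (hΓ : 0 ≤ Γ) {f : ι → ℝ}
    (hdec : 2 * ((x - xstar) ⬝ᵥ P *ᵥ f) < 0) (hcomp : 0 ≤ (E⁻¹ *ᵥ f) j) :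
    2 * ((x - xstar) ⬝ᵥ P *ᵥ (modulationMatrix E j Γ *ᵥ f)) < 0 := by
  have radial_nonneg : 0 ≤ ((x - xstar) ᵥ* P) ⬝ᵥ E.col j := by
    rw [hEj, dotProduct_smul, ← dotProduct_mulVec]
    exact mul_nonneg hc (hP.dotProduct_mulVec_nonneg (x - xstar))
  rw [dotProduct_mulVec] at hdec ⊢
  calc 2 * (((x - xstar) ᵥ* P) ⬝ᵥ modulationMatrix E j Γ *ᵥ f)
      ≤ 2 * (((x - xstar) ᵥ* P) ⬝ᵥ f) := by
        gcongr
        exact dotProduct_modulationMatrix_mulVec_le hE hΓ radial_nonneg hcomp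
    _ < 0 := hdec

/-- Key computation in Theorem 1 of the TLI chapter: if `P` is symmetric
positive definite, `r = (x − x*)/‖x − x*‖` is the first column of an
invertible matrix `E`, `Γ > 0`, `D = diag(1 − Γ, 1, …, 1)`, `M = E D E⁻¹`,
and the nominal field `f` satisfies `2 (x − x*)ᵀ P f < 0` and
`(E⁻¹ f)₁ ≥ 0`, then the modulated field also strictly decreases the
Lyapunov function: `2 (x − x*)ᵀ P (M f) < 0`. -/
theorem modulated_lyapunov_decrease {n : ℕ} [NeZero n]
    (P : Matrix (Fin n) (Fin n) ℝ) (hP : P.PosDef)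
    (x xstar : Fin n → ℝ) (hx : x ≠ xstar)
    (r : Fin n → ℝ)
    (hr : r = (Real.sqrt ((x - xstar) ⬝ᵥ (x - xstar)))⁻¹ • (x - xstar))
    (E : Matrix (Fin n) (Fin n) ℝ) (hE : IsUnit E.det)
    (hEr : ∀ i, E i 0 = r i)
    (Γ : ℝ) (hΓ : 0 < Γ)
    (D M : Matrix (Fin n) (Fin n) ℝ)
    (hD : D = Matrix.diagonal (fun i => if i = 0 then 1 - Γ else 1))
    (hM : M = E * D * E⁻¹)
    (f : Fin n → ℝ)
    (hdec : 2 * ((x - xstar) ⬝ᵥ P.mulVec f) < 0)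
    (hcomp : 0 ≤ E⁻¹.mulVec f 0) :
    2 * ((x - xstar) ⬝ᵥ P.mulVec (M.mulVec f)) < 0 := by
  subst hr hD hM
  exact modulated_lyapunov_decrease_general hP.posSemidef hE
    (inv_nonneg.2 (Real.sqrt_nonneg _)) (funext hEr) hΓ.le hdec hcomp
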